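/- There is a constant C > 0, independent of A and p, such that for every continuous bilinear form A : c_0 × c_0 → ℂ and every 1 ≤ p ≤ 2, with q defined by 1/q = 1/2 + 1/p' (where 1/p + 1/p' = 1), one has (Σ_k (Σ_j |A(e_j, e_k)|^q)^{p/q})^{1/p} ≤ C · ‖A‖. In particular, taking p = 4/3 (so q = 4/3) one recovers Littlewood's theorem: (Σ_{j,k} |A(e_j,e_k)|^{4/3})^{3/4} ≤ C · ‖A‖. -/

import Mathlib

open scoped BigOperators ENNReal

/-- The canonical unit vectors of `c₀`, the space of complex sequences converging to `0`. -/
noncomputable def e (j : ℕ) : ZeroAtInftyContinuousMap ℕ ℂ where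
  toFun := fun k => if k = j then 1 else 0
  continuous_toFun := continuous_of_discreteTopology
  zero_at_infty' := by
    have h : {j}ᶜ ∈ Filter.cocompact ℕ :=
      Filter.mem_cocompact.2 ⟨{j}, isCompact_singleton, by simp⟩
    refine Filter.Tendsto.congr' ?_ tendsto_const_nhds
    filter_upwards [h] with k hk
    simp only [Set.mem_compl_iff, Set.mem_singleton_iff] at hk
    simp [hk]


namespace LW

/-- Iterated Rademacher average. -/
noncomputable def Ev (c : ℕ → ℕ → ℂ) (φ : (ℕ → ℂ) → ℝ) : ℕ → (ℕ → ℂ) → ℝ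
  | 0, v => φ v
  | n + 1, v => (Ev c φ n (v + c n) + Ev c φ n (v - c n)) / 2

lemma Ev_le (c : ℕ → ℕ → ℂ) (φ : (ℕ → ℂ) → ℝ) (M : ℝ) (n : ℕ) : ∀ v : ℕ → ℂ,
    (∀ ε : ℕ → ℂ, (∀ j, ‖ε j‖ ≤ 1) → φ (v + ∑ j ∈ Finset.range n, ε j • c j) ≤ M) →
    Ev c φ n v ≤ M := by
  induction n with
  | zero =>
    intro v h
    simpa [Ev] using h (fun _ => 0) (by simp)
  | succ n ih =>
    intro v h
    have key : ∀ s : ℂ, ‖s‖ ≤ 1 → Ev c φ n (v + s • c n) ≤ M := by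
      intro s hs
      apply ih
      intro ε hε
      have := h (fun j => if j = n then s else ε j) (by intro j; split_ifs <;> simp [hs, hε])
      rw [Finset.sum_range_succ] at this
      have h2 : ∑ j ∈ Finset.range n, (if j = n then s else ε j) • c j
          = ∑ j ∈ Finset.range n, ε j • c j := by
        apply Finset.sum_congr rfl
        intro j hj
        rw [if_neg (Finset.mem_range.1 hj).ne]
      rw [h2] at this
      simp only [if_true] at this
      convert this using 2
      abel
    have h1 := key 1 (by simp)
    have h2 := key (-1) (by simp)
    simp only [one_smul, neg_smul, ← sub_eq_add_neg] at h1 h2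
    simp only [Ev]
    linarith

lemma Ev_mono (c : ℕ → ℕ → ℂ) (φ ψ : (ℕ → ℂ) → ℝ) (h : ∀ v, φ v ≤ ψ v) (n : ℕ) :
    ∀ v, Ev c φ n v ≤ Ev c ψ n v := by
  induction n with
  | zero => intro v; exact h v
  | succ n ih =>
    intro v
    simp only [Ev]
    linarith [ih (v + c n), ih (v - c n)]

lemma Ev_lin (c : ℕ → ℕ → ℂ) (φ ψ : (ℕ → ℂ) → ℝ) (a b : ℝ) (n : ℕ) :
    ∀ v, Ev c (fun v => a * φ v + b * ψ v) n v = a * Ev c φ n v + b * Ev c ψ n v := by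
  induction n with
  | zero => intro v; rfl
  | succ n ih =>
    intro v
    simp only [Ev, ih]
    ring

lemma Ev_sum (c : ℕ → ℕ → ℂ) (φ : ℕ → (ℕ → ℂ) → ℝ) (N n : ℕ) :
    ∀ v, Ev c (fun v => ∑ k ∈ Finset.range N, φ k v) n v
      = ∑ k ∈ Finset.range N, Ev c (φ k) n v := by
  induction n with
  | zero => intro v; rfl
  | succ n ih =>
    intro v
    simp only [Ev, ih, ← Finset.sum_add_distrib, Finset.sum_div]

lemma Ev_sq (c : ℕ → ℕ → ℂ) (k n : ℕ) :
    ∀ v, Ev c (fun v => ‖v k‖ ^ 2) n v = ‖v k‖ ^ 2 + ∑ j ∈ Finset.range n, ‖c j k‖ ^ 2 := by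
  induction n with
  | zero => intro v; simp [Ev]
  | succ n ih =>
    intro v
    simp only [Ev, ih, Finset.sum_range_succ, Pi.add_apply, Pi.sub_apply]
    simp only [Complex.sq_norm, Complex.normSq_add, Complex.normSq_sub]
    ring

lemma Ev_four (c : ℕ → ℕ → ℂ) (k n : ℕ) :
    ∀ v, Ev c (fun v => ‖v k‖ ^ 4) n v ≤ ‖v k‖ ^ 4 +
      6 * ‖v k‖ ^ 2 * (∑ j ∈ Finset.range n, ‖c j k‖ ^ 2) +
      3 * (∑ j ∈ Finset.range n, ‖c j k‖ ^ 2) ^ 2 := by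
  induction n with
  | zero => intro v; simp [Ev]
  | succ n ih =>
    intro v
    have h1 := ih (v + c n)
    have h2 := ih (v - c n)
    simp only [Ev, Finset.sum_range_succ]
    set s := ∑ j ∈ Finset.range n, ‖c j k‖ ^ 2
    simp only [Pi.add_apply, Pi.sub_apply] at h1 h2
    have e4 : ∀ z : ℂ, ‖z‖ ^ 4 = (‖z‖ ^ 2) ^ 2 := fun z => by ring
    have hB : (v k * (starRingEnd ℂ) (c n k)).re ^ 2 ≤ ‖v k‖ ^ 2 * ‖c n k‖ ^ 2 := by
      have := Complex.abs_re_le_norm (v k * (starRingEnd ℂ) (c n k))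
      rw [norm_mul, RCLike.norm_conj] at this
      rw [← mul_pow, ← sq_abs]
      gcongr
    rw [e4] at h1 h2 ⊢
    have ha : ‖v k + c n k‖ ^ 2 = ‖v k‖ ^ 2 + ‖c n k‖ ^ 2 +
        2 * (v k * (starRingEnd ℂ) (c n k)).re := by
      simp only [Complex.sq_norm, Complex.normSq_add]
    have hb : ‖v k - c n k‖ ^ 2 = ‖v k‖ ^ 2 + ‖c n k‖ ^ 2 -
        2 * (v k * (starRingEnd ℂ) (c n k)).re := by
      simp only [Complex.sq_norm, Complex.normSq_sub]
    rw [ha] at h1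
    rw [hb] at h2
    nlinarith [sq_nonneg (‖c n k‖ ^ 2)]

lemma khinchine (c : ℕ → ℕ → ℂ) (k n : ℕ) :
    Real.sqrt (∑ j ∈ Finset.range n, ‖c j k‖ ^ 2) ≤ 2 * Ev c (fun v => ‖v k‖) n 0 := by
  set σ := Real.sqrt (∑ j ∈ Finset.range n, ‖c j k‖ ^ 2) with hσ
  have hs : ∑ j ∈ Finset.range n, ‖c j k‖ ^ 2 = σ ^ 2 :=
    (Real.sq_sqrt (Finset.sum_nonneg fun _ _ => by positivity)).symm
  have hσ0 : 0 ≤ σ := Real.sqrt_nonneg _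
  have h2 := Ev_sq c k n 0
  have h4 := Ev_four c k n 0
  rw [hs] at h2 h4
  simp only [Pi.zero_apply, norm_zero] at h2 h4
  rcases hσ0.eq_or_lt with h | h
  · have := Ev_mono c (fun v => 0 * ‖v k‖ ^ 2 + 0 * ‖v k‖ ^ 2) (fun v => ‖v k‖)
      (by intro v; simp) n 0
    rw [Ev_lin] at this
    linarith
  · have := Ev_mono c (fun v => (12 * σ ^ 2) * ‖v k‖ ^ 2 + (-1) * ‖v k‖ ^ 4)
      (fun v => (16 * σ ^ 3) * ‖v k‖ + 0 * ‖v k‖)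
      (by
        intro v
        have hx : 0 ≤ ‖v k‖ := norm_nonneg _
        set x := ‖v k‖
        have : 0 ≤ x * ((x - 2 * σ) ^ 2 * (x + 4 * σ)) := by positivity
        nlinarith) n 0
    rw [Ev_lin, Ev_lin, h2] at this
    have h5 : σ ^ 3 * (9 * σ) ≤ σ ^ 3 * (16 * Ev c (fun v => ‖v k‖) n 0) := by nlinarith
    have := le_of_mul_le_mul_left h5 (by positivity)
    linarith

/-- Finite form of the boundedness of a bilinear form. -/
def Bdd (a : ℕ → ℕ → ℂ) (M : ℝ) : Prop :=
  ∀ (n N : ℕ) (x y : ℕ → ℂ), (∀ j, ‖x j‖ ≤ 1) → (∀ k, ‖y k‖ ≤ 1) →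
    ‖∑ j ∈ Finset.range n, ∑ k ∈ Finset.range N, x j * y k * a j k‖ ≤ M

lemma Bdd.swap {a : ℕ → ℕ → ℂ} {M : ℝ} (h : Bdd a M) : Bdd (fun j k => a k j) M := by
  intro n N x y hx hy
  rw [Finset.sum_comm]
  simpa only [mul_comm (x _)] using h N n y x hy hx

lemma mixed_fin {a : ℕ → ℕ → ℂ} {M : ℝ} (h : Bdd a M) (n N : ℕ) :
    ∑ k ∈ Finset.range N, Real.sqrt (∑ j ∈ Finset.range n, ‖a j k‖ ^ 2) ≤ 2 * M := by
  have h1 : Ev a (fun v => ∑ k ∈ Finset.range N, ‖v k‖) n 0 ≤ M := by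
    apply Ev_le
    intro ε hε
    set v : ℕ → ℂ := 0 + ∑ j ∈ Finset.range n, ε j • a j with hv
    have := h n N ε (fun k => (starRingEnd ℂ) (v k) / ‖v k‖) hε (by
      intro k
      rw [norm_div, RCLike.norm_conj, Complex.norm_real, norm_norm]
      exact div_self_le_one _)
    rw [Finset.sum_comm] at this
    have h3 : ∑ k ∈ Finset.range N, ∑ j ∈ Finset.range n,
        ε j * ((starRingEnd ℂ) (v k) / ‖v k‖) * a j k
        = ((∑ k ∈ Finset.range N, ‖v k‖ : ℝ) : ℂ) := by
      push_cast
      apply Finset.sum_congr rfl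
      intro k _
      have : v k = ∑ j ∈ Finset.range n, ε j * a j k := by
        simp [hv, Finset.sum_apply]
      calc _ = ((starRingEnd ℂ) (v k) / ‖v k‖) * v k := by
            rw [this, Finset.mul_sum]
            apply Finset.sum_congr rfl
            intro j _
            ring
        _ = _ := by
            rcases eq_or_ne (v k) 0 with h0 | h0
            · simp [h0]
            · have : (‖v k‖ : ℂ) ≠ 0 := by simpa using h0
              rw [div_mul_eq_mul_div, mul_comm, Complex.mul_conj, Complex.normSq_eq_norm_sq]
              field_simp
              push_cast
              ring
    rw [h3, Complex.norm_real] at this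
    exact (le_abs_self _).trans this
  rw [Ev_sum] at h1
  calc _ ≤ ∑ k ∈ Finset.range N, 2 * Ev a (fun v => ‖v k‖) n 0 :=
        Finset.sum_le_sum fun k _ => khinchine a k n
    _ ≤ _ := by rw [← Finset.mul_sum]; linarith

lemma minkowski_fin (b : ℕ → ℕ → ℝ) (n N : ℕ) :
    Real.sqrt (∑ k ∈ Finset.range N, (∑ j ∈ Finset.range n, b j k) ^ 2)
      ≤ ∑ j ∈ Finset.range n, Real.sqrt (∑ k ∈ Finset.range N, b j k ^ 2) := by
  have := norm_sum_le (Finset.range n)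
    (fun j => (WithLp.toLp 2 (fun k : Fin N => b j k) : EuclideanSpace ℝ (Fin N)))
  simp only [EuclideanSpace.norm_eq, Real.norm_eq_abs, sq_abs, WithLp.ofLp_sum,
    Finset.sum_apply] at this
  simpa only [Finset.sum_range] using this

lemma mixed_fin2 {a : ℕ → ℕ → ℂ} {M : ℝ} (h : Bdd a M) (n N : ℕ) :
    Real.sqrt (∑ k ∈ Finset.range N, (∑ j ∈ Finset.range n, ‖a j k‖) ^ 2) ≤ 2 * M :=
  (minkowski_fin (fun j k => ‖a j k‖) n N).trans (mixed_fin h.swap N n)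

lemma lim_le (F : ℕ → ℕ → ℝ≥0∞) (r : ℝ) (B : ℝ≥0∞)
    (h : ∀ n N, ∑ k ∈ Finset.range N, (∑ j ∈ Finset.range n, F j k) ^ r ≤ B) :
    ∑' k, (∑' j, F j k) ^ r ≤ B := by
  refine le_of_tendsto' (ENNReal.tendsto_nat_tsum _) fun N => ?_
  refine le_of_tendsto' (f := fun n => ∑ k ∈ Finset.range N, (∑ j ∈ Finset.range n, F j k) ^ r)
    (x := Filter.atTop) ?_ fun n => h n N
  refine tendsto_finsetSum _ fun k _ => ?_
  exact (ENNReal.continuous_rpow_const.tendsto _).comp (ENNReal.tendsto_nat_tsum _)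

lemma mixed1 {a : ℕ → ℕ → ℂ} {M : ℝ} (h : Bdd a M) :
    ∑' k, (∑' j, ENNReal.ofReal ‖a j k‖ ^ (2 : ℝ)) ^ (1 / 2 : ℝ) ≤ ENNReal.ofReal (2 * M) := by
  apply lim_le
  intro n N
  refine le_trans (le_of_eq ?_) (ENNReal.ofReal_le_ofReal (mixed_fin h n N))
  rw [ENNReal.ofReal_sum_of_nonneg (fun _ _ => Real.sqrt_nonneg _)]
  apply Finset.sum_congr rfl
  intro k _
  rw [Real.sqrt_eq_rpow, ← ENNReal.ofReal_rpow_of_nonneg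
    (Finset.sum_nonneg fun _ _ => by positivity) (by norm_num),
    ENNReal.ofReal_sum_of_nonneg (fun _ _ => by positivity)]
  congr 1
  apply Finset.sum_congr rfl
  intro j _
  rw [ENNReal.ofReal_rpow_of_nonneg (norm_nonneg _) (by norm_num)]
  norm_num

lemma mixed2 {a : ℕ → ℕ → ℂ} {M : ℝ} (h : Bdd a M) :
    ∑' k, (∑' j, ENNReal.ofReal ‖a j k‖) ^ (2 : ℝ) ≤ ENNReal.ofReal (2 * M) ^ (2 : ℝ) := by
  apply lim_le
  intro n N
  have h1 := Real.sqrt_le_iff.1 (mixed_fin2 h n N)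
  rw [ENNReal.ofReal_rpow_of_nonneg h1.1 (by norm_num)]
  norm_num only [Real.rpow_ofNat]
  refine le_trans (le_of_eq ?_) (ENNReal.ofReal_le_ofReal h1.2)
  rw [ENNReal.ofReal_sum_of_nonneg (fun _ _ => by positivity)]
  apply Finset.sum_congr rfl
  intro k _
  rw [ENNReal.ofReal_pow (Finset.sum_nonneg fun _ _ => by positivity),
    ENNReal.ofReal_sum_of_nonneg (fun _ _ => by positivity)]
  norm_num

lemma holder (f g : ℕ → ℝ≥0∞) (α β : ℝ) (hα : 0 ≤ α) (hβ : 0 ≤ β) (hs : α + β = 1) :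
    ∑' k, f k ^ α * g k ^ β ≤ (∑' k, f k) ^ α * (∑' k, g k) ^ β := by
  let _ : MeasurableSpace ℕ := ⊤
  have := ENNReal.lintegral_mul_norm_pow_le (μ := MeasureTheory.Measure.count) (f := f) (g := g)
    (measurable_of_countable _).aemeasurable (measurable_of_countable _).aemeasurable hα hβ hs
  simpa only [MeasureTheory.lintegral_count] using this

lemma interp (F : ℕ → ℕ → ℝ≥0∞) (B : ℝ≥0∞)
    (h1 : ∑' k, (∑' j, F j k ^ (2 : ℝ)) ^ (1 / 2 : ℝ) ≤ B)
    (h2 : ∑' k, (∑' j, F j k) ^ (2 : ℝ) ≤ B ^ (2 : ℝ))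
    (p q : ℝ) (hp1 : 1 ≤ p) (hp2 : p ≤ 2) (hq0 : 0 < q) (hq : 1 / q = 1 / 2 + (1 - 1 / p)) :
    ∑' k, (∑' j, F j k ^ q) ^ (p / q) ≤ B ^ p := by
  have hp0 : 0 < p := by linarith
  have hpi : 1 / p ≤ 1 := by rw [div_le_one hp0]; exact hp1
  have hpi2 : 1 / 2 ≤ 1 / p := one_div_le_one_div_of_le hp0 hp2
  have hq1 : 1 ≤ q := by
    have : 1 / q ≤ 1 := by linarith
    rwa [div_le_one hq0] at this
  have hq2 : q ≤ 2 := by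
    have : 1 / 2 ≤ 1 / q := by linarith
    exact (one_div_le_one_div (by norm_num) hq0).1 this
  -- p * (3/2) - 1 = p / q
  have hpq : p / q = p * (3 / 2) - 1 := by
    rw [div_eq_mul_one_div, hq]; field_simp; ring
  have hmul : q * (p / q) = p := by field_simp
  set r := p / q with hr
  have hr0 : 0 < r := by positivity
  -- exponents
  have e1 : (q - 1) * r = (1 / 2 : ℝ) * (2 - p) := by
    rw [sub_mul, hmul, hpq]; ring
  have e2 : (2 - q) * r = 2 * (p - 1) := by
    rw [sub_mul, hmul, hpq]; ring
  have step : ∀ k, (∑' j, F j k ^ q) ^ r ≤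
      ((∑' j, F j k ^ (2 : ℝ)) ^ (1 / 2 : ℝ)) ^ (2 - p) * ((∑' j, F j k) ^ (2 : ℝ)) ^ (p - 1) := by
    intro k
    have := holder (fun j => F j k ^ (2 : ℝ)) (fun j => F j k) (q - 1) (2 - q)
      (by linarith) (by linarith) (by ring)
    rw [← ENNReal.rpow_mul, ← ENNReal.rpow_mul, ← e1, ← e2, ENNReal.rpow_mul, ENNReal.rpow_mul,
      ← ENNReal.mul_rpow_of_nonneg _ _ hr0.le]
    refine ENNReal.rpow_le_rpow (le_trans (le_of_eq ?_) this) hr0.le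
    congr 1
    funext j
    rw [← ENNReal.rpow_mul, ← ENNReal.rpow_add_of_nonneg _ _ (by linarith) (by linarith)]
    congr 1
    ring
  refine (ENNReal.tsum_le_tsum step).trans ((holder _ _ (2 - p) (p - 1) (by linarith)
    (by linarith) (by ring)).trans ?_)
  refine (mul_le_mul' (ENNReal.rpow_le_rpow h1 (by linarith))
    (ENNReal.rpow_le_rpow h2 (by linarith))).trans (le_of_eq ?_)
  rw [← ENNReal.rpow_mul, ← ENNReal.rpow_add_of_nonneg _ _ (by linarith) (by linarith)]
  congr 1
  ring

lemma norm_comb (n : ℕ) (x : ℕ → ℂ) (hx : ∀ j, ‖x j‖ ≤ 1) :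
    ‖∑ j ∈ Finset.range n, x j • e j‖ ≤ 1 := by
  have hval : ∀ i, (∑ j ∈ Finset.range n, x j • e j) i = if i < n then x i else 0 := by
    intro i
    have : (∑ j ∈ Finset.range n, x j • e j) i = ∑ j ∈ Finset.range n, x j * (e j i) := by
      induction n with
      | zero => simp
      | succ n ih => rw [Finset.sum_range_succ, Finset.sum_range_succ, ← ih]; simp
    rw [this]
    simp [e]
  rw [← ZeroAtInftyContinuousMap.norm_toBCF_eq_norm]
  refine (BoundedContinuousFunction.norm_le zero_le_one).2 fun i => ?_
  change ‖(∑ j ∈ Finset.range n, x j • e j) i‖ ≤ 1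
  rw [hval]
  split_ifs
  · exact hx i
  · simp

lemma bdd_of (A : ContinuousMultilinearMap ℂ (fun _ : Fin 2 => ZeroAtInftyContinuousMap ℕ ℂ) ℂ) :
    Bdd (fun j k => A ![e j, e k]) ‖A‖ := by
  intro n N x y hx hy
  have key : A ![∑ j ∈ Finset.range n, x j • e j, ∑ k ∈ Finset.range N, y k • e k]
      = ∑ j ∈ Finset.range n, ∑ k ∈ Finset.range N, x j * y k * A ![e j, e k] := by
    have hl : ∀ w, A ![∑ j ∈ Finset.range n, x j • e j, w]
        = ∑ j ∈ Finset.range n, x j * A ![e j, w] := by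
      intro w
      have hu : ∀ u : ZeroAtInftyContinuousMap ℕ ℂ,
          Function.update ![(0 : ZeroAtInftyContinuousMap ℕ ℂ), w] 0 u = ![u, w] := by
        intro u; ext i; fin_cases i <;> simp
      have := A.toMultilinearMap.map_update_sum (Finset.range n) (0 : Fin 2)
        (fun j => x j • e j) ![0, w]
      simp only [MultilinearMap.map_update_smul] at this
      simp only [hu, smul_eq_mul] at this
      exact this
    have hr : ∀ w, A ![w, ∑ k ∈ Finset.range N, y k • e k]
        = ∑ k ∈ Finset.range N, y k * A ![w, e k] := by
      intro w
      have hu : ∀ u : ZeroAtInftyContinuousMap ℕ ℂ,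
          Function.update ![w, (0 : ZeroAtInftyContinuousMap ℕ ℂ)] 1 u = ![w, u] := by
        intro u; ext i; fin_cases i <;> simp
      have := A.toMultilinearMap.map_update_sum (Finset.range N) (1 : Fin 2)
        (fun k => y k • e k) ![w, 0]
      simp only [MultilinearMap.map_update_smul] at this
      simp only [hu, smul_eq_mul] at this
      exact this
    rw [hl]
    apply Finset.sum_congr rfl
    intro j _
    rw [hr, Finset.mul_sum]
    apply Finset.sum_congr rfl
    intro k _
    ring
  rw [← key]
  refine (A.le_opNorm _).trans ?_
  rw [Fin.prod_univ_two]
  have h1 := norm_comb n x hx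
  have h2 := norm_comb N y hy
  have := mul_le_one₀ h1 (norm_nonneg _) h2
  simpa using mul_le_mul_of_nonneg_left this (norm_nonneg A)

lemma pos_of {p q : ℝ} (hp1 : 1 ≤ p) (hq : 1 / q = 1 / 2 + (1 - 1 / p)) : 0 < q := by
  have hpi : 1 / p ≤ 1 := by rw [div_le_one (by linarith)]; exact hp1
  have : 0 < 1 / q := by linarith
  exact one_div_pos.1 this

lemma toReal_aux (f : ℕ → ℕ → ℝ) (hf : ∀ j k, 0 ≤ f j k) (B : ℝ) (hB : 0 ≤ B) (p r : ℝ)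
    (hp : 0 < p) (hr : 0 < r)
    (h : ∑' k, (∑' j, ENNReal.ofReal (f j k)) ^ r ≤ ENNReal.ofReal B ^ p) :
    (∀ k, Summable fun j => f j k) ∧ (Summable fun k => (∑' j, f j k) ^ r) ∧
      (∑' k, (∑' j, f j k) ^ r) ^ (1 / p) ≤ B := by
  rw [ENNReal.ofReal_rpow_of_nonneg hB hp.le] at h
  have hfin : ∑' k, (∑' j, ENNReal.ofReal (f j k)) ^ r ≠ ∞ :=
    (h.trans_lt ENNReal.ofReal_lt_top).ne
  have hk : ∀ k, ∑' j, ENNReal.ofReal (f j k) ≠ ∞ := by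
    intro k hk
    have := ENNReal.ne_top_of_tsum_ne_top hfin k
    rw [hk, ENNReal.top_rpow_of_pos hr] at this
    exact this rfl
  have h1 : ∀ k, Summable fun j => f j k := by
    intro k
    have := ENNReal.summable_toReal (hk k)
    simpa only [ENNReal.toReal_ofReal (hf _ _)] using this
  have heq : ∀ k, ((∑' j, ENNReal.ofReal (f j k)) ^ r).toReal = (∑' j, f j k) ^ r := by
    intro k
    rw [← ENNReal.toReal_rpow, ← ENNReal.ofReal_tsum_of_nonneg (fun j => hf j k) (h1 k),
      ENNReal.toReal_ofReal (tsum_nonneg fun j => hf j k)]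
  have h2 := ENNReal.summable_toReal hfin
  simp only [heq] at h2
  refine ⟨h1, h2, ?_⟩
  have h3 := ENNReal.toReal_mono ENNReal.ofReal_ne_top h
  rw [ENNReal.tsum_toReal_eq (fun k => ENNReal.ne_top_of_tsum_ne_top hfin k),
    ENNReal.toReal_ofReal (by positivity)] at h3
  simp only [heq] at h3
  calc _ ≤ (B ^ p) ^ (1 / p) := by
        refine Real.rpow_le_rpow (tsum_nonneg fun k => ?_) h3 (by positivity)
        exact Real.rpow_nonneg (tsum_nonneg fun j => hf j k) _
    _ = B := by rw [← Real.rpow_mul hB, mul_one_div_cancel hp.ne', Real.rpow_one]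

end LW

/-- There is a constant `C > 0`, independent of `A` and `p`, such that for every continuous
bilinear form `A` on `c₀ × c₀` and `1 ≤ p ≤ 2`, with `1/q = 1/2 + 1/p'`, the matrix
`(A(e_j, e_k))` lies in `ℓ_p(ℓ_q)` with norm at most `C‖A‖`. In particular, for
`p = q = 4/3` one recovers Littlewood's 4/3 theorem. -/
theorem littlewood_lp_lq :
    ∃ C > 0, ∀ A : ContinuousMultilinearMap ℂ (fun _ : Fin 2 => ZeroAtInftyContinuousMap ℕ ℂ) ℂ,
      (∀ p q : ℝ, 1 ≤ p → p ≤ 2 → 1 / q = 1 / 2 + (1 - 1 / p) →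
        (∀ k, Summable fun j => ‖A ![e j, e k]‖ ^ q) ∧
        (Summable fun k => (∑' j, ‖A ![e j, e k]‖ ^ q) ^ (p / q)) ∧
        (∑' k, (∑' j, ‖A ![e j, e k]‖ ^ q) ^ (p / q)) ^ (1 / p) ≤ C * ‖A‖) ∧
      (∑' jk : ℕ × ℕ, ‖A ![e jk.1, e jk.2]‖ ^ ((4 : ℝ) / 3)) ^ ((3 : ℝ) / 4) ≤ C * ‖A‖ := by
  refine ⟨2, by norm_num, fun A => ?_⟩
  have hb := LW.bdd_of A
  have main : ∀ p q : ℝ, 1 ≤ p → p ≤ 2 → 1 / q = 1 / 2 + (1 - 1 / p) →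
        (∀ k, Summable fun j => ‖A ![e j, e k]‖ ^ q) ∧
        (Summable fun k => (∑' j, ‖A ![e j, e k]‖ ^ q) ^ (p / q)) ∧
        (∑' k, (∑' j, ‖A ![e j, e k]‖ ^ q) ^ (p / q)) ^ (1 / p) ≤ 2 * ‖A‖ := by
    intro p q hp1 hp2 hq
    have hq0 := LW.pos_of hp1 hq
    have hp0 : 0 < p := by linarith
    have h := LW.interp _ _ (LW.mixed1 hb) (LW.mixed2 hb) p q hp1 hp2 hq0 hq
    simp only [ENNReal.ofReal_rpow_of_nonneg (norm_nonneg _) hq0.le] at h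
    exact LW.toReal_aux (fun j k => ‖A ![e j, e k]‖ ^ q) (fun j k => by positivity) (2 * ‖A‖)
      (by positivity) p (p / q) hp0 (by positivity) h
  refine ⟨main, ?_⟩
  obtain ⟨h1, h2, h3⟩ := main (4 / 3) (4 / 3) (by norm_num) (by norm_num) (by norm_num)
  norm_num only [div_self, Real.rpow_one] at h2 h3
  have hs : Summable fun kj : ℕ × ℕ => ‖A ![e kj.2, e kj.1]‖ ^ ((4 : ℝ) / 3) :=
    (summable_prod_of_nonneg (fun _ => by positivity)).2 ⟨h1, h2⟩
  have heq : ∑' jk : ℕ × ℕ, ‖A ![e jk.1, e jk.2]‖ ^ ((4 : ℝ) / 3)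
      = ∑' k, ∑' j, ‖A ![e j, e k]‖ ^ ((4 : ℝ) / 3) := by
    rw [← hs.tsum_prod, ← (Equiv.prodComm ℕ ℕ).tsum_eq]
    rfl
  rw [heq]
  exact h3
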